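/- For every irrational number x ∈ (0,1) and every integer n ≥ 1, the Lochs index from the continued fraction to the Farey sequence of partitions satisfies L_n(x, 𝒞ℱ, ℱ) = 2 q_n(x) + q_{n−1}(x) − 2; that is, 2 q_n + q_{n−1} − 2 is the largest ℓ ∈ ℕ such that I_n^{𝒞ℱ}(x) ⊆ I_ℓ^ℱ(x). -/

import Mathlib

open MeasureTheory Filter Set

noncomputable section

/-- The set `E_n^ℱ` of endpoints of the Farey partition `F_n`: rationals of `[0,1]` whose
denominator in lowest terms is at most `n+1`. -/
def fareyPts (n : ℕ) : Set ℝ :=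
  {x | ∃ p q : ℕ, q ≠ 0 ∧ q ≤ n + 1 ∧ p ≤ q ∧ Nat.gcd p q = 1 ∧ x = (p : ℝ) / q}

/-- The interval `I_n^ℱ(x)` of the Farey partition `F_n` containing `x`: the open interval
between the largest Farey point of order `n+1` below `x` and the smallest one above `x`. -/
def fareyInterval (n : ℕ) (x : ℝ) : Set ℝ :=
  Set.Ioo (sSup (fareyPts n ∩ Set.Iio x)) (sInf (fareyPts n ∩ Set.Ioi x))

/-- The partial quotient `a_{m+1}` of the continued fraction expansion of `x ∈ (0,1)`,
obtained from the Gauss map: `cfa x m = ⌊1 / T_G^m x⌋` where `T_G y = {1/y}`. -/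
def cfa (x : ℝ) (m : ℕ) : ℕ := ⌊1 / ((fun y => Int.fract (1 / y))^[m] x)⌋₊

/-- Numerators of the convergents of `x`, shifted by one: `cfp x (m+1) = p_m`, with
`p_{-1} = 1`, `p_0 = 0`, `p_{m+1} = a_{m+1} p_m + p_{m-1}`. -/
def cfp (x : ℝ) : ℕ → ℕ
  | 0 => 1
  | 1 => 0
  | m + 2 => cfa x m * cfp x (m + 1) + cfp x m

/-- Denominators of the convergents of `x`, shifted by one: `cfq x (m+1) = q_m`, with
`q_{-1} = 0`, `q_0 = 1`, `q_{m+1} = a_{m+1} q_m + q_{m-1}`. -/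
def cfq (x : ℝ) : ℕ → ℕ
  | 0 => 0
  | 1 => 1
  | m + 2 => cfa x m * cfq x (m + 1) + cfq x m

/-- The fundamental interval `I_n^{𝒞ℱ}(x)` of depth `n` of the continued fraction
expansion: the open interval with endpoints `p_n/q_n` and `(p_n+p_{n-1})/(q_n+q_{n-1})`,
the former being the left endpoint iff `n` is even. -/
def cfInterval (x : ℝ) (n : ℕ) : Set ℝ :=
  if Even n then
    Set.Ioo ((cfp x (n + 1) : ℝ) / (cfq x (n + 1) : ℝ))
      (((cfp x (n + 1) + cfp x n : ℕ) : ℝ) / ((cfq x (n + 1) + cfq x n : ℕ) : ℝ))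
  else
    Set.Ioo (((cfp x (n + 1) + cfp x n : ℕ) : ℝ) / ((cfq x (n + 1) + cfq x n : ℕ) : ℝ))
      ((cfp x (n + 1) : ℝ) / (cfq x (n + 1) : ℝ))

/-- The Lochs index `L_n(x, 𝒞ℱ, ℱ)` from the continued fraction sequence of partitions to
the Farey sequence of partitions. -/
def lochsCFtoF (x : ℝ) (n : ℕ) : ℕ :=
  sSup {ℓ : ℕ | cfInterval x n ⊆ fareyInterval ℓ x}

/-- The Lochs index `L_n(x, ℱ, 𝒞ℱ)` from the Farey sequence of partitions to the
continued fraction sequence of partitions. -/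
def lochsFtoCF (x : ℝ) (n : ℕ) : ℕ :=
  sSup {ℓ : ℕ | fareyInterval n x ⊆ cfInterval x ℓ}

/-!
The index `2 q_n + q_{n-1} - 2` comes from the mediant. The endpoints `a / b < c / d` of `I_n^{𝒞ℱ}`
satisfy `c b - a d = 1`, so every fraction strictly between them has denominator at least `b + d`,
and their mediant `(a + c) / (b + d)` attains this bound. Hence the interval contains no Farey point
of `F_ℓ` exactly when `ℓ + 1 < b + d = q_n + (q_n + q_{n-1})`; and since it contains `x`, this is
the same as being contained in the Farey interval around `x`.
-/

section Mediant

lemma add_le_of_det_eq_one {a b c d p q : ℤ} (hb : 0 ≤ b) (hd : 0 ≤ d)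
    (hdet : c * b - a * d = 1) (hap : a * q < p * b) (hpc : p * d < c * q) : b + d ≤ q :=
  calc
    b + d ≤ b * (c * q - p * d) + d * (p * b - a * q) :=
      add_le_add (le_mul_of_one_le_right hb (by lia)) (le_mul_of_one_le_right hd (by lia))
    _ = (c * b - a * d) * q := by ring
    _ = q := by rw [hdet, one_mul]

lemma coprime_add_add_of_det_eq_one {a b c d : ℕ} (hdet : c * b = a * d + 1) :
    (a + c).Coprime (b + d) := by
  zify at hdet
  refine Nat.isCoprime_iff_coprime.mp ⟨b, -a, ?_⟩
  push_cast
  linear_combination hdet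

variable {K : Type*} [Field K] [LinearOrder K] [IsStrictOrderedRing K]

lemma add_div_add_mem_Ioo {a b c d : K} (hb : 0 < b) (hd : 0 < d) (h : a / b < c / d) :
    (a + c) / (b + d) ∈ Ioo (a / b) (c / d) := by
  rw [div_lt_div_iff₀ hb hd] at h
  constructor
  · rw [div_lt_div_iff₀ hb (add_pos hb hd)]
    linarith
  · rw [div_lt_div_iff₀ (add_pos hb hd) hd]
    linarith

lemma strictMonoOn_add_mul_div_add_mul {p q p' q' : K} (hq : 0 < q) (hq' : 0 ≤ q')
    (h : p * q' < p' * q) :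
    StrictMonoOn (fun t ↦ (p + t * p') / (q + t * q')) (Ici 0) := by
  intro s hs t ht hst
  have hden {r : K} (hr : r ∈ Ici 0) : 0 < q + r * q' :=
    add_pos_of_pos_of_nonneg hq (mul_nonneg hr hq')
  rw [div_lt_div_iff₀ (hden hs) (hden ht), ← sub_pos]
  calc
    0 < (t - s) * (p' * q - p * q') := mul_pos (sub_pos.mpr hst) (sub_pos.mpr h)
    _ = (p + t * p') * (q + s * q') - (p + s * p') * (q + t * q') := by ring

lemma strictAntiOn_add_mul_div_add_mul {p q p' q' : K} (hq : 0 < q) (hq' : 0 ≤ q')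
    (h : p' * q < p * q') :
    StrictAntiOn (fun t ↦ (p + t * p') / (q + t * q')) (Ici 0) := by
  have hneg := strictMonoOn_add_mul_div_add_mul (p := -p) (p' := -p') hq hq' (by linarith)
  refine hneg.neg.congr fun t _ ↦ ?_
  simp only [mul_neg, ← neg_add, neg_div, neg_neg]

end Mediant

section FareyPartition

variable {ℓ : ℕ} {x : ℝ}

lemma finite_fareyPts (ℓ : ℕ) : (fareyPts ℓ).Finite := by
  refine ((finite_Iic (ℓ + 1)).image2 (fun p q : ℕ ↦ (p : ℝ) / q) (finite_Iic (ℓ + 1))).subset ?_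
  rintro _ ⟨p, q, -, hq, hpq, -, rfl⟩
  exact mem_image2_of_mem (hpq.trans hq) hq

lemma zero_mem_fareyPts (ℓ : ℕ) : (0 : ℝ) ∈ fareyPts ℓ :=
  ⟨0, 1, by simp⟩

lemma one_mem_fareyPts (ℓ : ℕ) : (1 : ℝ) ∈ fareyPts ℓ :=
  ⟨1, 1, by simp⟩

lemma notMem_fareyPts_of_irrational (hirr : Irrational x) : x ∉ fareyPts ℓ := by
  rintro ⟨p, q, -, -, -, -, rfl⟩
  exact hirr ⟨p / q, by push_cast; rfl⟩

lemma disjoint_fareyInterval_fareyPts (hx : x ∉ fareyPts ℓ) :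
    Disjoint (fareyInterval ℓ x) (fareyPts ℓ) := by
  rw [Set.disjoint_left]
  rintro y ⟨hlo, hhi⟩ hy
  rcases lt_trichotomy y x with hyx | rfl | hxy
  · exact hlo.not_ge (le_csSup ⟨x, fun z hz ↦ hz.2.le⟩ ⟨hy, hyx⟩)
  · exact hx hy
  · exact hhi.not_ge (csInf_le ⟨x, fun z hz ↦ hz.2.le⟩ ⟨hy, hxy⟩)

lemma subset_fareyInterval_iff_disjoint {s : Set ℝ} (hx : x ∈ Ioo 0 1) (hxℓ : x ∉ fareyPts ℓ)
    (hs : s.OrdConnected) (hxs : x ∈ s) :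
    s ⊆ fareyInterval ℓ x ↔ Disjoint s (fareyPts ℓ) := by
  refine ⟨fun h ↦ (disjoint_fareyInterval_fareyPts hxℓ).mono_left h, fun h y hy ↦ ?_⟩
  have hlo : sSup (fareyPts ℓ ∩ Iio x) ∈ fareyPts ℓ ∩ Iio x :=
    Nonempty.csSup_mem ⟨0, zero_mem_fareyPts ℓ, hx.1⟩ ((finite_fareyPts ℓ).inter_of_left _)
  have hhi : sInf (fareyPts ℓ ∩ Ioi x) ∈ fareyPts ℓ ∩ Ioi x :=
    Nonempty.csInf_mem ⟨1, one_mem_fareyPts ℓ, hx.2⟩ ((finite_fareyPts ℓ).inter_of_left _)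
  constructor <;> by_contra! hle
  · exact Set.disjoint_left.mp h (hs.out hy hxs ⟨hle, hlo.2.le⟩) hlo.1
  · exact Set.disjoint_left.mp h (hs.out hxs hy ⟨hhi.2.le, hle⟩) hhi.1

lemma mediant_mem_fareyPts {a b c d : ℕ} (hd : 0 < d) (hcd : c ≤ d)
    (hdet : c * b = a * d + 1) (hle : b + d ≤ ℓ + 1) : ((a + c) / (b + d) : ℝ) ∈ fareyPts ℓ := by
  have hab : a < b := by
    refine Nat.lt_of_mul_lt_mul_right (a := d) ?_
    calc
      a * d < c * b := by lia
      _ ≤ b * d := by rw [mul_comm]; gcongr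
  exact ⟨a + c, b + d, by lia, hle, by lia, coprime_add_add_of_det_eq_one hdet, by push_cast; rfl⟩

lemma disjoint_Ioo_fareyPts_iff {a b c d : ℕ} (hd : 0 < d) (hcd : c ≤ d)
    (hdet : c * b = a * d + 1) :
    Disjoint (Ioo (a / b : ℝ) (c / d)) (fareyPts ℓ) ↔ ℓ + 1 < b + d := by
  have hb : 0 < b := Nat.pos_of_mul_pos_left (a := c) (by lia)
  have hbR : (0 : ℝ) < b := mod_cast hb
  have hdR : (0 : ℝ) < d := mod_cast hd
  constructor
  · intro hdisj
    by_contra! hle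
    have hac : (a / b : ℝ) < c / d := by
      rw [div_lt_div_iff₀ hbR hdR]
      exact mod_cast hdet ▸ Nat.lt_succ_self _
    exact Set.disjoint_left.mp hdisj (add_div_add_mem_Ioo hbR hdR hac)
      (mediant_mem_fareyPts hd hcd hdet hle)
  · rw [Set.disjoint_left]
    rintro hlt _ ⟨hap, hpc⟩ ⟨p, q, hq, hqℓ, -, -, rfl⟩
    have hqR : (0 : ℝ) < q := mod_cast Nat.pos_of_ne_zero hq
    rw [div_lt_div_iff₀ hbR hqR] at hap
    rw [div_lt_div_iff₀ hqR hdR] at hpc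
    have hbdq : (b + d : ℤ) ≤ q :=
      add_le_of_det_eq_one (a := a) (c := c) (p := p) (by positivity) (by positivity)
        (by zify at hdet; linarith) (mod_cast hap) (mod_cast hpc)
    lia

end FareyPartition

section GaussMap

/-- The Gauss map `T_G y = {1 / y}`, the shift on continued fraction expansions; `cfa` spells it out
as a `fun`, to which this is definitionally equal. -/
def gaussMap (y : ℝ) : ℝ := Int.fract (1 / y)

variable {x y : ℝ}

lemma irrational_gaussMap (hy : Irrational y) : Irrational (gaussMap y) := by
  rw [gaussMap, Int.fract, one_div]
  exact hy.inv.sub_intCast _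

lemma gaussMap_mem_Ioo (hy : Irrational y) : gaussMap y ∈ Ioo 0 1 :=
  ⟨(Int.fract_nonneg _).lt_of_ne' (irrational_gaussMap hy).ne_zero, Int.fract_lt_one _⟩

lemma gaussMap_iterate_mem_Ioo (hx : x ∈ Ioo 0 1) (hirr : Irrational x) (m : ℕ) :
    gaussMap^[m] x ∈ Ioo 0 1 := by
  have hmaps : MapsTo gaussMap {y | y ∈ Ioo 0 1 ∧ Irrational y} {y | y ∈ Ioo 0 1 ∧ Irrational y} :=
    fun y hy ↦ ⟨gaussMap_mem_Ioo hy.2, irrational_gaussMap hy.2⟩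
  exact (hmaps.iterate m ⟨hx, hirr⟩).1

lemma mul_natFloor_add_gaussMap (hy : 0 < y) : y * (⌊1 / y⌋₊ + gaussMap y) = 1 := by
  rw [natCast_floor_eq_intCast_floor (by positivity), gaussMap, Int.floor_add_fract,
    mul_one_div_cancel hy.ne']

lemma gaussMap_iterate_mul_cfa_add {m : ℕ} (h : 0 < gaussMap^[m] x) :
    gaussMap^[m] x * (cfa x m + gaussMap^[m + 1] x) = 1 := by
  rw [Function.iterate_succ_apply']
  exact mul_natFloor_add_gaussMap h

end GaussMap

section Convergents

variable {x : ℝ}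

lemma cfa_zero_pos (hx : x ∈ Ioo 0 1) : 0 < cfa x 0 :=
  Nat.floor_pos.mpr (one_le_one_div hx.1 hx.2.le)

lemma cfq_succ_pos (hx : x ∈ Ioo 0 1) (m : ℕ) : 0 < cfq x (m + 1) := by
  induction m using Nat.twoStepInduction with
  | zero => exact Nat.one_pos
  | one => simpa [cfq] using cfa_zero_pos hx
  | more m ih _ => exact Nat.add_pos_right _ ih

lemma cfp_succ_le_cfq_succ (hx : x ∈ Ioo 0 1) (m : ℕ) : cfp x (m + 1) ≤ cfq x (m + 1) := by
  induction m using Nat.twoStepInduction with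
  | zero => exact Nat.zero_le 1
  | one => simpa [cfp, cfq] using Nat.succ_le_of_lt (cfa_zero_pos hx)
  | more m ih ih' => exact Nat.add_le_add (Nat.mul_le_mul_left _ ih') ih

lemma cfp_succ_add_cfp_le_cfq_succ_add_cfq (hx : x ∈ Ioo 0 1) (m : ℕ) :
    cfp x (m + 1) + cfp x m ≤ cfq x (m + 1) + cfq x m := by
  cases m with
  | zero => exact le_rfl
  | succ m => exact Nat.add_le_add (cfp_succ_le_cfq_succ hx _) (cfp_succ_le_cfq_succ hx _)

lemma cfp_succ_mul_cfq_sub_cfp_mul_cfq_succ (x : ℝ) (m : ℕ) :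
    (cfp x (m + 1) * cfq x m - cfp x m * cfq x (m + 1) : ℤ) = (-1) ^ (m + 1) := by
  induction m with
  | zero => simp [cfp, cfq]
  | succ m ih =>
    simp only [cfp, cfq, Nat.cast_add, Nat.cast_mul]
    rw [pow_succ]
    linear_combination -ih

lemma cfp_mul_cfq_succ_of_even (x : ℝ) {m : ℕ} (hm : Even m) :
    cfp x m * cfq x (m + 1) = cfp x (m + 1) * cfq x m + 1 := by
  have hdet := cfp_succ_mul_cfq_sub_cfp_mul_cfq_succ x m
  rw [hm.add_one.neg_one_pow] at hdet
  zify
  linarith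

lemma cfp_succ_mul_cfq_of_odd (x : ℝ) {m : ℕ} (hm : Odd m) :
    cfp x (m + 1) * cfq x m = cfp x m * cfq x (m + 1) + 1 := by
  have hdet := cfp_succ_mul_cfq_sub_cfp_mul_cfq_succ x m
  rw [hm.add_one.neg_one_pow] at hdet
  zify
  linarith

lemma mul_cfq_succ_add_eq (hx : x ∈ Ioo 0 1) (hirr : Irrational x) (m : ℕ) :
    x * (cfq x (m + 1) + gaussMap^[m] x * cfq x m) = cfp x (m + 1) + gaussMap^[m] x * cfp x m := by
  induction m with
  | zero => simp [cfp, cfq]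
  | succ m ih =>
    have ht := (gaussMap_iterate_mem_Ioo hx hirr m).1
    have hstep := gaussMap_iterate_mul_cfa_add ht
    apply mul_left_cancel₀ ht.ne'
    simp only [cfp, cfq, Nat.cast_add, Nat.cast_mul]
    linear_combination ih + (x * cfq x (m + 1) - cfp x (m + 1)) * hstep

lemma eq_cfp_add_div_cfq_add (hx : x ∈ Ioo 0 1) (hirr : Irrational x) (m : ℕ) :
    x = (cfp x (m + 1) + gaussMap^[m] x * cfp x m) /
      (cfq x (m + 1) + gaussMap^[m] x * cfq x m) := by
  have hq : (0 : ℝ) < cfq x (m + 1) := mod_cast cfq_succ_pos hx m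
  have ht := (gaussMap_iterate_mem_Ioo hx hirr m).1
  rw [eq_div_iff (by positivity), mul_cfq_succ_add_eq hx hirr]

end Convergents

section FundamentalInterval

variable {x : ℝ}

lemma ordConnected_cfInterval (x : ℝ) (n : ℕ) : (cfInterval x n).OrdConnected := by
  unfold cfInterval
  split_ifs <;> exact ordConnected_Ioo

/-- As `t` runs through `[0, 1]`, `(p_n + t p_{n-1}) / (q_n + t q_{n-1})` runs strictly
monotonically from one endpoint of the interval to the other, and it equals `x` at
`t = T_G^n x`. -/
lemma mem_cfInterval (hx : x ∈ Ioo 0 1) (hirr : Irrational x) (n : ℕ) : x ∈ cfInterval x n := by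
  obtain ⟨ht₀, ht₁⟩ := gaussMap_iterate_mem_Ioo hx hirr n
  have hq : (0 : ℝ) < cfq x (n + 1) := mod_cast cfq_succ_pos hx n
  have hq' : (0 : ℝ) ≤ cfq x n := Nat.cast_nonneg _
  have hxt := eq_cfp_add_div_cfq_add hx hirr n
  unfold cfInterval
  split_ifs with hn
  · have hdet : (cfp x (n + 1) * cfq x n : ℝ) < cfp x n * cfq x (n + 1) :=
      mod_cast cfp_mul_cfq_succ_of_even x hn ▸ Nat.lt_succ_self _
    have hmono := strictMonoOn_add_mul_div_add_mul hq hq' hdet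
    have hlo := hmono self_mem_Ici ht₀.le ht₀
    have hhi := hmono ht₀.le (mem_Ici.mpr zero_le_one) ht₁
    exact ⟨by simpa [← hxt] using hlo, by simpa [← hxt] using hhi⟩
  · have hdet : (cfp x n * cfq x (n + 1) : ℝ) < cfp x (n + 1) * cfq x n :=
      mod_cast cfp_succ_mul_cfq_of_odd x (Nat.not_even_iff_odd.mp hn) ▸ Nat.lt_succ_self _
    have hanti := strictAntiOn_add_mul_div_add_mul hq hq' hdet
    have hhi := hanti self_mem_Ici ht₀.le ht₀
    have hlo := hanti ht₀.le (mem_Ici.mpr zero_le_one) ht₁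
    exact ⟨by simpa [← hxt] using hlo, by simpa [← hxt] using hhi⟩

lemma disjoint_cfInterval_fareyPts_iff (hx : x ∈ Ioo 0 1) {n ℓ : ℕ} :
    Disjoint (cfInterval x n) (fareyPts ℓ) ↔ ℓ + 1 < 2 * cfq x (n + 1) + cfq x n := by
  have hq := cfq_succ_pos hx n
  unfold cfInterval
  split_ifs with hn
  · have hdet : (cfp x (n + 1) + cfp x n) * cfq x (n + 1) =
        cfp x (n + 1) * (cfq x (n + 1) + cfq x n) + 1 := by
      linear_combination cfp_mul_cfq_succ_of_even x hn
    rw [disjoint_Ioo_fareyPts_iff (Nat.add_pos_left hq _)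
      (cfp_succ_add_cfp_le_cfq_succ_add_cfq hx n) hdet]
    lia
  · have hdet : cfp x (n + 1) * (cfq x (n + 1) + cfq x n) =
        (cfp x (n + 1) + cfp x n) * cfq x (n + 1) + 1 := by
      linear_combination cfp_succ_mul_cfq_of_odd x (Nat.not_even_iff_odd.mp hn)
    rw [disjoint_Ioo_fareyPts_iff hq (cfp_succ_le_cfq_succ hx n) hdet]
    lia

lemma cfInterval_subset_fareyInterval_iff (hx : x ∈ Ioo 0 1) (hirr : Irrational x) {n ℓ : ℕ} :
    cfInterval x n ⊆ fareyInterval ℓ x ↔ ℓ + 1 < 2 * cfq x (n + 1) + cfq x n := by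
  rw [subset_fareyInterval_iff_disjoint hx (notMem_fareyPts_of_irrational hirr)
    (ordConnected_cfInterval x n) (mem_cfInterval hx hirr n), disjoint_cfInterval_fareyPts_iff hx]

end FundamentalInterval

/-- The Lochs index from the continued fraction to the Farey sequence of partitions:
`L_n(x, 𝒞ℱ, ℱ) = 2 q_n + q_{n-1} − 2` (with `q_n = cfq x (n+1)`, `q_{n-1} = cfq x n`). -/
theorem lochsCFtoF_eq (x : ℝ) (hx : x ∈ Set.Ioo (0 : ℝ) 1) (hirr : Irrational x)
    (n : ℕ) (hn : 1 ≤ n) :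
    lochsCFtoF x n = 2 * cfq x (n + 1) + cfq x n - 2 := by
  have hq := cfq_succ_pos hx n
  have hset : {ℓ | cfInterval x n ⊆ fareyInterval ℓ x} =
      Iic (2 * cfq x (n + 1) + cfq x n - 2) := by
    ext ℓ
    rw [mem_ofPred_eq, cfInterval_subset_fareyInterval_iff hx hirr, mem_Iic]
    lia
  rw [lochsCFtoF, hset, csSup_Iic]
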